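/- For k ≥ 2, let U_k be the binary matrix whose columns are indexed by the integers 1, 2, …, 2^k−1, whose rows are indexed by those integers m with 1 ≤ m ≤ 2^k−1 that are not powers of 2, and where row m (with 2^t < m < 2^{t+1} for the integer t = ⌊log₂ m⌋) has 1-entries exactly in columns m, m−2^t, and 2^t. Then every nonempty 1-free set of columns of U_k has cardinality at least 2^{k−1}. -/

import Mathlib

/-!
Let `N = 2 ^ (k - 1)`. The rows `{N + j, j, N}` with `0 < j < N` pair up the columns `j` and
`N + j`. If `N ∈ S`, each pair meets `S`, so reduction modulo `N` maps `S` onto all `N` residues.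
If `N ∉ S`, each pair lies inside `S` or misses it, so `S` is its part below `N` together with the
translate of that part by `N`; that part is nonempty and 1-free for the rows below `N`, and
induction on `k` applies.
-/

section

open Finset

/-- A finite set `S` of columns is 1-free for a binary matrix when the sum of the columns in `S` has
no entry equal to `1`. The matrix is given by the set `𝓡` of supports of its rows: the entry of that
sum in the row with support `R` is `#(S ∩ R)`. -/
def IsOneFree {α : Type*} [DecidableEq α] (𝓡 : Set (Finset α)) (S : Finset α) : Prop :=
  ∀ R ∈ 𝓡, #(S ∩ R) ≠ 1

/-- The supports of the rows `m` of `U_k` with `N < m < 2 * N`, where `N` is a power of `2`;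
the row is parametrised by `j = m - N`. -/
def pivotRows (N : ℕ) : Set (Finset ℕ) :=
  (fun j ↦ {N + j, j, N}) '' Set.Ioo 0 N

/-- The supports of all the rows of the matrix `U_k`. -/
def rowSupports (k : ℕ) : Set (Finset ℕ) :=
  ⋃ t < k, pivotRows (2 ^ t)

theorem pivotRows_subset_rowSupports {t k : ℕ} (h : t < k) :
    pivotRows (2 ^ t) ⊆ rowSupports k :=
  Set.subset_biUnion_of_mem (u := fun t ↦ pivotRows (2 ^ t)) h

theorem rowSupports_mono : Monotone rowSupports := fun _ _ hkl ↦
  Set.biUnion_subset_biUnion_left fun _ ht ↦ lt_of_lt_of_le ht hkl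

theorem lt_two_pow_of_mem_rowSupports {k x : ℕ} {R : Finset ℕ} (hR : R ∈ rowSupports k)
    (hx : x ∈ R) : x < 2 ^ k := by
  simp only [rowSupports, pivotRows, Set.mem_iUnion, Set.mem_image] at hR
  obtain ⟨t, htk, j, ⟨_, hj⟩, rfl⟩ := hR
  have hpow : 2 ^ (t + 1) ≤ 2 ^ k := Nat.pow_le_pow_right two_pos htk
  simp only [mem_insert, mem_singleton] at hx
  omega

namespace IsOneFree

section General

variable {α : Type*} [DecidableEq α] {𝓡 𝓡' : Set (Finset α)} {S R : Finset α}

theorem anti (h : IsOneFree 𝓡' S) (hsub : 𝓡 ⊆ 𝓡') : IsOneFree 𝓡 S :=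
  fun R hR ↦ h R (hsub hR)

theorem filter {p : α → Prop} [DecidablePred p] (h : IsOneFree 𝓡 S)
    (hp : ∀ R ∈ 𝓡, ∀ x ∈ R, p x) : IsOneFree 𝓡 (S.filter p) := by
  intro R hR
  rw [filter_inter, ← inter_filter, filter_true_of_mem (hp R hR)]
  exact h R hR

theorem exists_mem_ne (h : IsOneFree 𝓡 S) (hR : R ∈ 𝓡) {a : α} (haS : a ∈ S) (haR : a ∈ R) :
    ∃ b ∈ S ∩ R, b ≠ a := by
  have hpos : 0 < #(S ∩ R) := card_pos.2 ⟨a, mem_inter.2 ⟨haS, haR⟩⟩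
  exact Finset.exists_mem_ne (lt_of_le_of_ne hpos (h R hR).symm) a

end General

section Pivot

variable {N j : ℕ} {S : Finset ℕ}

theorem mem_or_add_mem (h : IsOneFree (pivotRows N) S) (hN : N ∈ S) (hj : j ∈ Set.Ioo 0 N) :
    j ∈ S ∨ N + j ∈ S := by
  obtain ⟨b, hb, hbN⟩ := h.exists_mem_ne (Set.mem_image_of_mem _ hj) hN (by simp)
  simp only [mem_inter, mem_insert, mem_singleton] at hb
  grind

theorem add_mem_iff (h : IsOneFree (pivotRows N) S) (hN : N ∉ S) (hj : j ∈ Set.Ioo 0 N) :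
    N + j ∈ S ↔ j ∈ S := by
  constructor <;> intro hmem <;>
    obtain ⟨b, hb, hne⟩ := h.exists_mem_ne (Set.mem_image_of_mem _ hj) hmem (by simp) <;>
    simp only [mem_inter, mem_insert, mem_singleton] at hb <;>
    grind

theorem le_card_of_mem (h : IsOneFree (pivotRows N) S) (hN : N ∈ S) : N ≤ #S := by
  have hsurj : range N ⊆ S.image (· % N) := by
    intro j hj
    have hjN : j < N := mem_range.1 hj
    rw [mem_image]
    rcases Nat.eq_zero_or_pos j with rfl | hj0
    · exact ⟨N, hN, Nat.mod_self N⟩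
    · rcases h.mem_or_add_mem hN ⟨hj0, hjN⟩ with hjS | hjS
      · exact ⟨j, hjS, Nat.mod_eq_of_lt hjN⟩
      · exact ⟨N + j, hjS, by rw [Nat.add_mod_left, Nat.mod_eq_of_lt hjN]⟩
  calc
    N = #(range N) := (card_range N).symm
    _ ≤ #(S.image (· % N)) := card_le_card hsurj
    _ ≤ #S := card_image_le

theorem two_mul_card_filter_lt_le (h : IsOneFree (pivotRows N) S) (hN : N ∉ S) (h0 : 0 ∉ S) :
    2 * #{x ∈ S | x < N} ≤ #S := by
  have hshift : #{x ∈ S | x < N} ≤ #{x ∈ S | ¬x < N} := by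
    refine card_le_card_of_injOn (N + ·) (fun j hj ↦ ?_) (add_right_injective N).injOn
    obtain ⟨hjS, hjN⟩ := mem_filter.1 hj
    have hj0 : 0 < j := Nat.pos_of_ne_zero (ne_of_mem_of_not_mem hjS h0)
    exact mem_filter.2 ⟨(h.add_mem_iff hN ⟨hj0, hjN⟩).2 hjS, not_lt.2 (Nat.le_add_right N j)⟩
  have hsplit := card_filter_add_card_filter_not (s := S) (· < N)
  omega

theorem filter_lt_nonempty (h : IsOneFree (pivotRows N) S) (hN : N ∉ S)
    (hlt : ∀ x ∈ S, x < 2 * N) (hS : S.Nonempty) : {x ∈ S | x < N}.Nonempty := by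
  obtain ⟨x, hx⟩ := hS
  rcases lt_or_ge x N with hxN | hxN
  · exact ⟨x, mem_filter.2 ⟨hx, hxN⟩⟩
  · obtain ⟨j, rfl⟩ := Nat.exists_eq_add_of_le hxN
    have hj0 : j ≠ 0 := by rintro rfl; exact hN hx
    have hjN : j < N := by have := hlt _ hx; omega
    exact ⟨j, mem_filter.2 ⟨(h.add_mem_iff hN ⟨Nat.pos_of_ne_zero hj0, hjN⟩).1 hx, hjN⟩⟩

end Pivot

theorem two_pow_le_card {k : ℕ} {S : Finset ℕ} (h : IsOneFree (rowSupports (k + 1)) S)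
    (hsub : S ⊆ Ioo 0 (2 ^ (k + 1))) (hS : S.Nonempty) : 2 ^ k ≤ #S := by
  induction k generalizing S with
  | zero => exact hS.card_pos
  | succ k ih =>
    have hpivot : IsOneFree (pivotRows (2 ^ (k + 1))) S :=
      h.anti (pivotRows_subset_rowSupports (Nat.lt_succ_self _))
    by_cases hN : 2 ^ (k + 1) ∈ S
    · exact hpivot.le_card_of_mem hN
    · have h0 : 0 ∉ S := fun hmem ↦ (mem_Ioo.1 (hsub hmem)).1.false
      have hlt : ∀ x ∈ S, x < 2 * 2 ^ (k + 1) := fun x hx ↦ by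
        rw [← pow_succ']; exact (mem_Ioo.1 (hsub hx)).2
      have hlow : IsOneFree (rowSupports (k + 1)) {x ∈ S | x < 2 ^ (k + 1)} :=
        (h.anti (rowSupports_mono (Nat.le_succ _))).filter
          fun _ hR _ ↦ lt_two_pow_of_mem_rowSupports hR
      have hlow_sub : {x ∈ S | x < 2 ^ (k + 1)} ⊆ Ioo 0 (2 ^ (k + 1)) := fun x hx ↦
        have ⟨hxS, hxN⟩ := mem_filter.1 hx
        mem_Ioo.2 ⟨(mem_Ioo.1 (hsub hxS)).1, hxN⟩
      calc
        2 ^ (k + 1) = 2 * 2 ^ k := pow_succ' 2 k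
        _ ≤ 2 * #{x ∈ S | x < 2 ^ (k + 1)} :=
          Nat.mul_le_mul_left 2 (ih hlow hlow_sub (hpivot.filter_lt_nonempty hN hlt hS))
        _ ≤ #S := hpivot.two_mul_card_filter_lt_le hN h0

end IsOneFree

theorem log_two_pow_add {t j : ℕ} (hj : j < 2 ^ t) : Nat.log 2 (2 ^ t + j) = t :=
  Nat.log_eq_of_pow_le_of_lt_pow (Nat.le_add_right _ _) (by rw [pow_succ]; omega)

theorem two_pow_add_ne_two_pow {t j : ℕ} (hj : j ∈ Set.Ioo 0 (2 ^ t)) (u : ℕ) :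
    2 ^ t + j ≠ 2 ^ u := by
  intro heq
  have htu : t = u := by rw [← log_two_pow_add hj.2, heq, Nat.log_pow one_lt_two]
  have hj0 : 0 < j := hj.1
  subst htu
  omega

theorem sum_ite_eq_card_inter {α : Type*} [DecidableEq α] (S : Finset α) (a b c : α) :
    (∑ x ∈ S, if x = a ∨ x = b ∨ x = c then 1 else 0) = #(S ∩ {a, b, c}) := by
  rw [← card_filter, ← filter_mem_eq_inter]
  simp only [mem_insert, mem_singleton]

theorem isOneFree_rowSupports {k : ℕ} {S : Finset ℕ}
    (h : ∀ m ∈ Icc 1 (2 ^ k - 1), (¬∃ t : ℕ, m = 2 ^ t) →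
      (∑ c ∈ S, if c = m ∨ c = m - 2 ^ Nat.log 2 m ∨ c = 2 ^ Nat.log 2 m
        then 1 else 0) ≠ 1) :
    IsOneFree (rowSupports k) S := by
  intro R hR
  have hlt : ∀ x ∈ R, x < 2 ^ k := fun _ ↦ lt_two_pow_of_mem_rowSupports hR
  simp only [rowSupports, pivotRows, Set.mem_iUnion, Set.mem_image] at hR
  obtain ⟨t, -, j, hj, rfl⟩ := hR
  have hmem : 2 ^ t + j ∈ Icc 1 (2 ^ k - 1) := by
    have hltk : 2 ^ t + j < 2 ^ k := hlt _ (mem_insert_self _ _)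
    exact mem_Icc.2 ⟨Nat.add_pos_left (Nat.two_pow_pos t) j, Nat.le_sub_one_of_lt hltk⟩
  have hrow := h (2 ^ t + j) hmem fun ⟨u, hu⟩ ↦ two_pow_add_ne_two_pow hj u hu
  rwa [log_two_pow_add hj.2, Nat.add_sub_cancel_left, sum_ite_eq_card_inter] at hrow

end

/-- For `k ≥ 2`, let `U_k` be the binary matrix whose columns are indexed by the integers
`1, …, 2^k − 1`, whose rows are indexed by those `m` in this range that are not powers of
`2`, and where row `m` (with `2^t < m < 2^(t+1)`, `t = ⌊log₂ m⌋`) has its 1-entries exactly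
in columns `m`, `m − 2^t` and `2^t`.  Then every nonempty 1-free set of columns of `U_k`
has cardinality at least `2^(k−1)`. -/
theorem stmt_7 (k : ℕ) (hk : 2 ≤ k)
    (S : Finset ℕ) (hSsub : S ⊆ Finset.Icc 1 (2 ^ k - 1)) (hS : S.Nonempty)
    (hfree : ∀ m ∈ Finset.Icc 1 (2 ^ k - 1), (¬ ∃ t : ℕ, m = 2 ^ t) →
      (∑ c ∈ S, if c = m ∨ c = m - 2 ^ (Nat.log 2 m) ∨ c = 2 ^ (Nat.log 2 m)
        then (1 : ℕ) else 0) ≠ 1) :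
    2 ^ (k - 1) ≤ S.card := by
  have hsub : S ⊆ Finset.Ioo 0 (2 ^ k) := fun x hx ↦ by
    have hx' := Finset.mem_Icc.1 (hSsub hx)
    exact Finset.mem_Ioo.2 (by omega)
  obtain ⟨n, rfl⟩ : ∃ n, k = n + 1 := Nat.exists_eq_add_one.2 (by omega)
  exact (isOneFree_rowSupports hfree).two_pow_le_card hsub hS
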